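/- arXiv:2501.01654 — 3 statements merged into one kernel-verified Lean document; each statement's English description precedes it below -/
import Mathlib

section
/- The map sending an affine isometry to its linear part restricts to a group isomorphism from Aut(σ) onto Aut(ν). -/
/-!
Write `⟪ν i, p j - p k⟫ = h i * (δ_{ji} - δ_{ki})`, where `h i > 0` is the height of the simplex
over the face opposite `p i`. The differences `p j - p k` span `V`, and so do the normals `ν i`, so
a vector is determined by its inner products with either family.

An affine automorphism of a polytope permutes its vertices, and all `p i` (resp. all `ν i`) are
vertices of `σ` (resp. `N`), as each is the unique maximizer of the functional `⟪ν i, ·⟫`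
(`exists_perm_of_image_convexHull_eq`).

* If an isometry `ζ` with linear part `φ` sends `p i` to `p (π i)`, then `φ (ν i)` is a unit
  inward normal of the face opposite `p (π i)`, hence equals `ν (π i)` (`map_normal_eq`); so `φ`
  preserves `N`. The translation part of `ζ` is determined by `φ`, as `ζ` fixes the barycentre
  of `σ`.
* Conversely, let `φ (ν i) = ν (π i)`. The relation `∑ i, (h i)⁻¹ • ν i = 0` and its image under
  `φ` show that `h (π i)` is proportional to `h i`; summing over `i` shows that the factor is `1`
  (`height_perm_eq`). Comparing inner products with the `ν (π k)`, one gets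
  `φ (p j - p k) = p (π j) - p (π k)`, so `φ` followed by a translation sends each `p i` to
  `p (π i)`.
-/

open scoped RealInnerProductSpace

/-- If a linear functional is larger at `q i` than at all other `q j`, then `q i` is its only
maximizer on the convex hull of the `q j`. -/
lemma eq_of_le_of_mem_convexHull {V ι : Type*} [AddCommGroup V] [Module ℝ V] (q : ι → V) (i : ι)
    (f : V →ₗ[ℝ] ℝ) (hf : ∀ j, j ≠ i → f (q j) < f (q i)) {y : V}
    (hy : y ∈ convexHull ℝ (Set.range q)) (hle : f (q i) ≤ f y) : y = q i := by
  have hconv : Convex ℝ {y : V | y = q i ∨ f y < f (q i)} := by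
    rw [convex_iff_forall_pos]
    rintro x hx y hy a b ha hb hab
    simp only [Set.mem_ofPred_eq] at hx hy ⊢
    have hb' : b = 1 - a := by linarith
    rcases hx with rfl | hx
    · rcases hy with rfl | hy
      · left
        rw [← add_smul, hab, one_smul]
      · right
        rw [map_add, map_smul, map_smul, smul_eq_mul, smul_eq_mul, hb']
        nlinarith
    · right
      have hy' : f y ≤ f (q i) := by
        rcases hy with rfl | hy
        · exact le_rfl
        · exact hy.le
      rw [map_add, map_smul, map_smul, smul_eq_mul, smul_eq_mul, hb']
      nlinarith
  have hsub : convexHull ℝ (Set.range q) ⊆ {y : V | y = q i ∨ f y < f (q i)} := by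
    refine convexHull_min ?_ hconv
    rintro _ ⟨j, rfl⟩
    by_cases hj : j = i
    · exact Or.inl (by rw [hj])
    · exact Or.inr (hf j hj)
  exact (hsub hy).resolve_right (not_lt.mpr hle)

/-- An affine map that preserves the convex hull of finitely many points permutes these points,
provided each of them is exposed by some linear functional. -/
lemma exists_perm_of_image_convexHull_eq {V ι : Type*} [AddCommGroup V] [Module ℝ V] [Finite ι]
    (q : ι → V) (f : ι → V →ₗ[ℝ] ℝ) (hf : ∀ i j, j ≠ i → f i (q j) < f i (q i))
    (e : V →ᵃ[ℝ] V) (he : e '' convexHull ℝ (Set.range q) = convexHull ℝ (Set.range q)) :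
    ∃ π : Equiv.Perm ι, ∀ i, e (q i) = q (π i) := by
  have hr : convexHull ℝ (Set.range (e ∘ q)) = convexHull ℝ (Set.range q) := by
    rw [Set.range_comp, ← AffineMap.image_convexHull, he]
  -- The maximum of `f i` on the hull is attained at some image `e (q j)`, which must be `q i`.
  have key : ∀ i, ∃ j, e (q j) = q i := by
    intro i
    have hi : q i ∈ convexHull ℝ (Set.range (e ∘ q)) := by
      rw [hr]
      exact subset_convexHull ℝ _ ⟨i, rfl⟩
    obtain ⟨_, ⟨j, rfl⟩, hj⟩ := ((f i).convexOn convex_univ).exists_ge_of_mem_convexHull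
      (Set.subset_univ _) hi
    refine ⟨j, eq_of_le_of_mem_convexHull q i (f i) (hf i) ?_ hj⟩
    rw [← hr]
    exact subset_convexHull ℝ _ ⟨j, rfl⟩
  choose ρ hρ using key
  have hq : Function.Injective q := by
    intro i j hij
    by_contra hne
    exact absurd (hf i j (Ne.symm hne)) (by rw [hij]; exact lt_irrefl _)
  have hinj : Function.Injective ρ := by
    intro i j hij
    apply hq
    rw [← hρ i, ← hρ j, hij]
  let τ : Equiv.Perm ι := Equiv.ofBijective ρ (Finite.injective_iff_bijective.mp hinj)
  refine ⟨τ.symm, fun i => ?_⟩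
  rw [← hρ (τ.symm i)]
  exact congrArg (fun x => e (q x)) (τ.apply_symm_apply i).symm

/-- A permutation of the generators induces invariance of the convex hull. -/
lemma image_convexHull_eq_of_perm {V ι : Type*} [AddCommGroup V] [Module ℝ V]
    (q : ι → V) (e : V →ᵃ[ℝ] V) (π : Equiv.Perm ι) (h : ∀ i, e (q i) = q (π i)) :
    e '' convexHull ℝ (Set.range q) = convexHull ℝ (Set.range q) := by
  rw [AffineMap.image_convexHull, ← Set.range_comp]
  have : e ∘ q = q ∘ π := funext h
  rw [this, Set.range_comp, π.range_eq_univ, Set.image_univ]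

section

variable {V : Type*} [NormedAddCommGroup V] [InnerProductSpace ℝ V] {n : ℕ}

/-- Inner products of the face normals with the edges; `h i` is the height of the simplex over the
face opposite `p i`. -/
lemma exists_height (hn : 1 ≤ n) (p ν : Fin (n + 1) → V)
    (hν_orth : ∀ i, ∀ j, j ≠ i → ∀ k, k ≠ i → ⟪ν i, p j - p k⟫ = 0)
    (hν_inward : ∀ i, ∀ j, j ≠ i → 0 < ⟪ν i, p i - p j⟫) :
    ∃ h : Fin (n + 1) → ℝ, (∀ i, 0 < h i) ∧ ∀ i j k, ⟪ν i, p j - p k⟫ =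
      h i * ((if j = i then 1 else 0) - (if k = i then 1 else 0)) := by
  have : Nontrivial (Fin (n + 1)) := Fin.nontrivial_iff_two_le.mpr (by omega)
  choose s hs using fun i : Fin (n + 1) => exists_ne i
  refine ⟨fun i => ⟪ν i, p i - p (s i)⟫, fun i => hν_inward i _ (hs i), fun i j k => ?_⟩
  have hk : ∀ k, k ≠ i → ⟪ν i, p i - p k⟫ = ⟪ν i, p i - p (s i)⟫ := by
    intro k hk
    have := hν_orth i k hk (s i) (hs i)
    rw [inner_sub_right] at this ⊢
    rw [inner_sub_right]
    linarith
  by_cases hj : j = i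
  · by_cases hki : k = i
    · simp [hj, hki]
    · simp [hj, hki, hk k hki]
  · by_cases hki : k = i
    · rw [← neg_sub, inner_neg_right, hki, hk j hj]
      simp [hj]
    · simp [hj, hki, hν_orth i j hj k hki]

lemma eq_zero_of_inner_edges [FiniteDimensional ℝ V] (hdim : Module.finrank ℝ V = n)
    (p : Fin (n + 1) → V) (hp : AffineIndependent ℝ p) {v : V}
    (hv : ∀ j k, ⟪v, p j - p k⟫ = 0) : v = 0 := by
  have htop := hp.vectorSpan_eq_top_of_card_eq_finrank_add_one (by simp [hdim])
  rw [vectorSpan_range_eq_span_range_vsub_right ℝ p 0] at htop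
  have hmem : v ∈ Submodule.span ℝ (Set.range fun i => p i -ᵥ p 0) := htop ▸ Submodule.mem_top
  obtain ⟨c, hc⟩ := (Submodule.mem_span_range_iff_exists_fun ℝ).mp hmem
  rw [← inner_self_eq_zero (𝕜 := ℝ)]
  nth_rewrite 2 [← hc]
  simp [inner_sum, inner_smul_right, hv]

lemma eq_zero_of_inner_normals [FiniteDimensional ℝ V] (hdim : Module.finrank ℝ V = n)
    (p ν : Fin (n + 1) → V) (hp : AffineIndependent ℝ p) (h : Fin (n + 1) → ℝ)
    (hpos : ∀ i, 0 < h i)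
    (hh : ∀ i j k, ⟪ν i, p j - p k⟫ =
      h i * ((if j = i then 1 else 0) - (if k = i then 1 else 0)))
    {v : V} (hv : ∀ i, ⟪ν i, v⟫ = 0) : v = 0 := by
  have htop := hp.vectorSpan_eq_top_of_card_eq_finrank_add_one (by simp [hdim])
  rw [vectorSpan_range_eq_span_range_vsub_right ℝ p 0] at htop
  have hmem : v ∈ Submodule.span ℝ (Set.range fun i => p i -ᵥ p 0) := htop ▸ Submodule.mem_top
  obtain ⟨c, hc⟩ := (Submodule.mem_span_range_iff_exists_fun ℝ).mp hmem
  have hc0 : ∀ i, i ≠ 0 → c i = 0 := by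
    intro i hi
    have := hv i
    rw [← hc] at this
    simpa [inner_sum, inner_smul_right, hh, hi.symm, (hpos i).ne'] using this
  rw [← hc]
  refine Finset.sum_eq_zero fun i _ => ?_
  by_cases hi : i = 0
  · simp [hi]
  · simp [hc0 i hi]

/-- If the linear isometry `φ` acts on the edges through a permutation of the vertices, it acts on
the face normals through the same permutation. -/
lemma map_normal_eq [FiniteDimensional ℝ V] (hdim : Module.finrank ℝ V = n)
    (p ν : Fin (n + 1) → V) (hp : AffineIndependent ℝ p) (hν_unit : ∀ i, ‖ν i‖ = 1)
    (h : Fin (n + 1) → ℝ) (hpos : ∀ i, 0 < h i)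
    (hh : ∀ i j k, ⟪ν i, p j - p k⟫ =
      h i * ((if j = i then 1 else 0) - (if k = i then 1 else 0)))
    (φ : V ≃ₗᵢ[ℝ] V) (π : Equiv.Perm (Fin (n + 1)))
    (hφ : ∀ j k, φ (p j - p k) = p (π j) - p (π k)) (i : Fin (n + 1)) :
    φ (ν i) = ν (π i) := by
  have key : h (π i) • φ (ν i) - h i • ν (π i) = 0 := by
    refine eq_zero_of_inner_edges hdim p hp fun j k => ?_
    obtain ⟨j, rfl⟩ := π.surjective j
    obtain ⟨k, rfl⟩ := π.surjective k
    rw [inner_sub_left, real_inner_smul_left, real_inner_smul_left, hh, ← hφ,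
      LinearIsometryEquiv.inner_map_map, hh]
    simp only [EmbeddingLike.apply_eq_iff_eq]
    ring
  rw [sub_eq_zero] at key
  have hn : h (π i) = h i := by
    have := congrArg norm key
    simpa [norm_smul, hν_unit, abs_of_pos (hpos _)] using this
  rw [hn] at key
  exact smul_right_injective V (hpos i).ne' key

/-- A permutation of the face normals induced by a linear isometry preserves the heights. -/
lemma height_perm_eq [FiniteDimensional ℝ V] (hdim : Module.finrank ℝ V = n)
    (p ν : Fin (n + 1) → V) (hp : AffineIndependent ℝ p)
    (h : Fin (n + 1) → ℝ) (hpos : ∀ i, 0 < h i)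
    (hh : ∀ i j k, ⟪ν i, p j - p k⟫ =
      h i * ((if j = i then 1 else 0) - (if k = i then 1 else 0)))
    (φ : V ≃ₗᵢ[ℝ] V) (π : Equiv.Perm (Fin (n + 1))) (hφ : ∀ i, φ (ν i) = ν (π i))
    (i : Fin (n + 1)) : h (π i) = h i := by
  have hrel : ∑ i, (h i)⁻¹ • ν i = 0 := by
    refine eq_zero_of_inner_edges hdim p hp fun j k => ?_
    simp [sum_inner, real_inner_smul_left, hh, (hpos _).ne']
  have hrel' : ∑ i, (h i)⁻¹ • ν (π i) = 0 := by
    have := congrArg φ hrel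
    simpa [map_sum, hφ] using this
  -- Pairing the permuted relation with an edge compares two of the ratios `h (π i) / h i`.
  have hratio : ∀ a b, (h a)⁻¹ * h (π a) = (h b)⁻¹ * h (π b) := by
    intro a b
    have := congrArg (fun v => ⟪v, p (π a) - p (π b)⟫) hrel'
    simp only [sum_inner, real_inner_smul_left, hh, EmbeddingLike.apply_eq_iff_eq,
      inner_zero_left, mul_sub, Finset.sum_sub_distrib] at this
    simpa [sub_eq_zero] using this
  have hprop : ∀ a, h (π a) = ((h i)⁻¹ * h (π i)) * h a := by
    intro a
    rw [← hratio a i]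
    field_simp [(hpos a).ne']
  have hsum : ∑ a, h a = ((h i)⁻¹ * h (π i)) * ∑ a, h a := by
    rw [Finset.mul_sum, ← Equiv.sum_comp π h]
    exact Finset.sum_congr rfl fun a _ => hprop a
  have hs : 0 < ∑ a, h a := Finset.sum_pos (fun a _ => hpos a) Finset.univ_nonempty
  have hone : (h i)⁻¹ * h (π i) = 1 := by
    apply mul_right_cancel₀ hs.ne'
    rw [← hsum, one_mul]
  simpa [hone] using hprop i

end

theorem statement_0
    {V : Type*} [NormedAddCommGroup V] [InnerProductSpace ℝ V] [FiniteDimensional ℝ V]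
    {n : ℕ} (hn : 1 ≤ n) (hdim : Module.finrank ℝ V = n)
    (p : Fin (n + 1) → V) (hp : AffineIndependent ℝ p)
    (ν : Fin (n + 1) → V)
    (hν_unit : ∀ i, ‖ν i‖ = 1)
    (hν_orth : ∀ i, ∀ j, j ≠ i → ∀ k, k ≠ i → ⟪ν i, p j - p k⟫ = 0)
    (hν_inward : ∀ i, ∀ j, j ≠ i → 0 < ⟪ν i, p i - p j⟫)
    (σ : Set V) (hσ : σ = convexHull ℝ (Set.range p))
    (N : Set V) (hN : N = convexHull ℝ (Set.range ν)) :
    -- the linear-part map is well defined from `Aut σ` to `Aut ν`,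
    (∀ ζ : V ≃ᵃⁱ[ℝ] V, ⇑ζ '' σ = σ → ⇑ζ.linearIsometryEquiv '' N = N) ∧
    -- it is multiplicative,
    (∀ ζ η : V ≃ᵃⁱ[ℝ] V, (ζ * η).linearIsometryEquiv
      = ζ.linearIsometryEquiv * η.linearIsometryEquiv) ∧
    -- injective on `Aut σ`,
    (∀ ζ η : V ≃ᵃⁱ[ℝ] V, ⇑ζ '' σ = σ → ⇑η '' σ = σ →
      ζ.linearIsometryEquiv = η.linearIsometryEquiv → ζ = η) ∧
    -- and surjective onto `Aut ν`.
    (∀ φ : V ≃ₗᵢ[ℝ] V, ⇑φ '' N = N →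
      ∃ ζ : V ≃ᵃⁱ[ℝ] V, ⇑ζ '' σ = σ ∧ ζ.linearIsometryEquiv = φ) := by
  obtain ⟨h, hpos, hh⟩ := exists_height hn p ν hν_orth hν_inward
  subst hσ hN
  have hexp : ∀ i j, j ≠ i → innerₛₗ ℝ (ν i) (p j) < innerₛₗ ℝ (ν i) (p i) := by
    intro i j hj
    have := hν_inward i j hj
    rw [inner_sub_right] at this
    simpa using this
  have hν_ne : ∀ i j, j ≠ i → ν j ≠ ν i := by
    intro i j hj he
    have h1 := hν_inward i j hj
    have h2 := hν_inward j i hj.symm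
    rw [he, ← neg_sub, inner_neg_right] at h2
    linarith
  have hexpν : ∀ i j, j ≠ i → innerₛₗ ℝ (ν i) (ν j) < innerₛₗ ℝ (ν i) (ν i) := by
    intro i j hj
    have h1 : ⟪ν i, ν j⟫ < 1 :=
      (inner_lt_one_iff_real_of_norm_eq_one (hν_unit i) (hν_unit j)).mpr (hν_ne i j hj).symm
    simpa [hν_unit] using h1
  have hperm : ∀ ζ : V ≃ᵃⁱ[ℝ] V,
      ⇑ζ '' convexHull ℝ (Set.range p) = convexHull ℝ (Set.range p) →
      ∃ π : Equiv.Perm (Fin (n + 1)), ∀ i, ζ (p i) = p (π i) := fun ζ hζ =>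
    exists_perm_of_image_convexHull_eq p (fun i => innerₛₗ ℝ (ν i)) hexp
      (ζ.toAffineEquiv : V →ᵃ[ℝ] V) hζ
  refine ⟨fun ζ hζ => ?_, fun ζ η => ?_, fun ζ η hζ hη hlin => ?_, fun φ hφ => ?_⟩
  · obtain ⟨π, hπ⟩ := hperm ζ hζ
    have hedge : ∀ j k, ζ.linearIsometryEquiv (p j - p k) = p (π j) - p (π k) := by
      intro j k
      rw [← hπ, ← hπ]
      exact ζ.map_vsub (p j) (p k)
    exact image_convexHull_eq_of_perm ν
      (ζ.linearIsometryEquiv.toLinearEquiv.toLinearMap.toAffineMap) π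
      (map_normal_eq hdim p ν hp hν_unit h hpos hh _ π hedge)
  · rfl
  · obtain ⟨π, hπ⟩ := hperm ζ hζ
    obtain ⟨ρ, hρ⟩ := hperm η hη
    have hform : ∀ (ξ : V ≃ᵃⁱ[ℝ] V) (x : V), ξ x = ξ.linearIsometryEquiv x + ξ 0 := by
      intro ξ x
      simpa using ξ.map_vadd 0 x
    -- Both maps permute the vertices, so the sums of the images agree;
    -- hence so do the translation parts.
    have hsum : ∑ i, ζ (p i) = ∑ i, η (p i) := by
      simp only [hπ, hρ]
      rw [Equiv.sum_comp π p, Equiv.sum_comp ρ p]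
    have h0 : ζ 0 = η 0 := by
      simp only [hform ζ (p _), hform η (p _), hlin, Finset.sum_add_distrib] at hsum
      have h1 : (n + 1) • ζ 0 = (n + 1) • η 0 := by simpa using hsum
      have h2 : ((n + 1 : ℕ) : ℝ) • ζ 0 = ((n + 1 : ℕ) : ℝ) • η 0 := by
        rw [Nat.cast_smul_eq_nsmul, Nat.cast_smul_eq_nsmul, h1]
      exact smul_right_injective V (Nat.cast_ne_zero.mpr n.succ_ne_zero) h2
    ext x
    rw [hform ζ, hform η, hlin, h0]
  · obtain ⟨π, hπ⟩ := exists_perm_of_image_convexHull_eq ν (fun i => innerₛₗ ℝ (ν i)) hexpν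
      (φ.toLinearEquiv.toLinearMap.toAffineMap) hφ
    replace hπ : ∀ i, φ (ν i) = ν (π i) := hπ
    have hedge : ∀ j k, φ (p j - p k) - (p (π j) - p (π k)) = 0 := by
      intro j k
      refine eq_zero_of_inner_normals hdim p ν hp h hpos hh fun i => ?_
      obtain ⟨i, rfl⟩ := π.surjective i
      rw [inner_sub_right, hh, ← hπ, LinearIsometryEquiv.inner_map_map, hh,
        height_perm_eq hdim p ν hp h hpos hh φ π hπ i]
      simp
    let ζ : V ≃ᵃⁱ[ℝ] V := AffineIsometryEquiv.mk' (fun x => φ (x - p 0) + p (π 0)) φ (p 0)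
      (by intro x; simp)
    refine ⟨ζ, ?_, AffineIsometryEquiv.linearIsometryEquiv_mk' _ _ _ _⟩
    refine image_convexHull_eq_of_perm p (ζ.toAffineEquiv : V →ᵃ[ℝ] V) π fun i => ?_
    change φ (p i - p 0) + p (π 0) = p (π i)
    rw [sub_eq_zero.mp (hedge i 0), sub_add_cancel]
end

section
/- For each index j, the set Π_j = {−α₀} ∪ (Π ∖ {α_j}) is a base of Φ if and only if α_j is minuscule (m_j = 1); and in that case α_j is the lowest root of Φ with respect to Π_j, i.e., −α_j is the highest root of Φ relative to the base Π_j. -/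
/-!
Everything is a change of coordinates. Write `α'` for `α` with `α j` replaced by
`-α₀ = -∑ mᵢ αᵢ`. A vector with coordinates `d` in `α'` has `α`-coordinates `-d j * m j` at `j`
and `d i - d j * m i` at `i ≠ j` (`sum_update`). So `α'` is always a vector space basis, and if it
is a base then, reading off the `j`-th coordinate of `α j`, the integer `m j` divides `1`.

Conversely let `m j = 1`. A root with `α`-coordinates `c` has `α'`-coordinates `-c j` and
`c i - c j * m i` (`sum_eq_sum_update`). Since `-m ≤ c ≤ m` (`coeff_bounds`), `c j ∈ {-1, 0, 1}`,
and in each case the `α'`-coordinates have constant sign. The same three cases show that they are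
bounded above by `m`, which are precisely the `α'`-coordinates of `-α j`: so `-α j` is highest.
-/


open scoped RealInnerProductSpace

open scoped RealInnerProductSpace

/-- The reflection `s_a` in the hyperplane orthogonal to `a`. -/
noncomputable def reflMap {V : Type*} [NormedAddCommGroup V] [InnerProductSpace ℝ V]
    (a x : V) : V :=
  x - (2 * ⟪a, x⟫ / ⟪a, a⟫) • a

/-- A reduced irreducible crystallographic root system in `V`. -/
structure IsRootSystem {V : Type*} [NormedAddCommGroup V] [InnerProductSpace ℝ V]
    (Φ : Set V) : Prop where
  finite : Φ.Finite
  spans : Submodule.span ℝ Φ = ⊤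
  not_zero : (0 : V) ∉ Φ
  reduced : ∀ a ∈ Φ, ∀ t : ℝ, t • a ∈ Φ → t = 1 ∨ t = -1
  refl_mem : ∀ a ∈ Φ, ∀ b ∈ Φ, reflMap a b ∈ Φ
  crystallographic : ∀ a ∈ Φ, ∀ b ∈ Φ, ∃ k : ℤ, 2 * ⟪a, b⟫ / ⟪a, a⟫ = (k : ℝ)
  irreducible : ¬ ∃ Φ₁ Φ₂ : Set V, Φ₁.Nonempty ∧ Φ₂.Nonempty ∧ Φ₁ ∪ Φ₂ = Φ ∧
    ∀ a ∈ Φ₁, ∀ b ∈ Φ₂, ⟪a, b⟫ = 0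

/-- `α : Fin n → V` is a base (system of simple roots) of `Φ`. -/
structure IsBase {V : Type*} [NormedAddCommGroup V] [InnerProductSpace ℝ V]
    (Φ : Set V) {n : ℕ} (α : Fin n → V) : Prop where
  mem : ∀ i, α i ∈ Φ
  indep : LinearIndependent ℝ α
  spans : Submodule.span ℝ (Set.range α) = ⊤
  int_comb : ∀ β ∈ Φ, ∃ c : Fin n → ℤ,
    β = ∑ i, (c i : ℝ) • α i ∧ ((∀ i, 0 ≤ c i) ∨ (∀ i, c i ≤ 0))

/-- `α₀ = ∑ mᵢ αᵢ` is the highest root of `Φ` w.r.t. the base `α`. -/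
structure IsHighestRoot {V : Type*} [NormedAddCommGroup V] [InnerProductSpace ℝ V]
    (Φ : Set V) {n : ℕ} (α : Fin n → V) (m : Fin n → ℕ) (α₀ : V) : Prop where
  pos : ∀ i, 0 < m i
  mem : α₀ ∈ Φ
  eq : α₀ = ∑ i, (m i : ℝ) • α i
  highest : ∀ β ∈ Φ, ∀ c : Fin n → ℤ, β = ∑ i, (c i : ℝ) • α i → ∀ i, c i ≤ (m i : ℤ)

/-- The Weyl group of `Φ`, generated by the reflections in the roots. -/
noncomputable def WeylGroup {V : Type*} [NormedAddCommGroup V] [InnerProductSpace ℝ V]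
    (Φ : Set V) : Subgroup (V ≃ₗᵢ[ℝ] V) :=
  Subgroup.closure {w : V ≃ₗᵢ[ℝ] V | ∃ a ∈ Φ, ∀ x, w x = reflMap a x}

/-- The fundamental alcove. -/
def alcove {V : Type*} [NormedAddCommGroup V] [InnerProductSpace ℝ V]
    {n : ℕ} (α : Fin n → V) (α₀ : V) : Set V :=
  {x | (∀ i, 0 ≤ ⟪α i, x⟫) ∧ ⟪α₀, x⟫ ≤ 1}

/-- The coweight lattice `P^∨`. -/
def coweightLattice {V : Type*} [NormedAddCommGroup V] [InnerProductSpace ℝ V]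
    (Φ : Set V) : Set V :=
  {ω | ∀ a ∈ Φ, ∃ k : ℤ, ⟪ω, a⟫ = (k : ℝ)}

/-- The coroot lattice `Q^∨`: the `ℤ`-span of the coroots. -/
def corootLattice {V : Type*} [NormedAddCommGroup V] [InnerProductSpace ℝ V]
    (Φ : Set V) : Set V :=
  (Submodule.span ℤ ((fun a : V => (2 / ⟪a, a⟫) • a) '' Φ) : Set V)

/-- The extended affine Weyl group `W_ext = {t_γ ∘ w : γ ∈ P^∨, w ∈ W}` inside `E(V)`. -/
noncomputable def extendedWeylGroup {V : Type*} [NormedAddCommGroup V] [InnerProductSpace ℝ V]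
    (Φ : Set V) : Set (V ≃ᵃⁱ[ℝ] V) :=
  {ζ | ∃ γ ∈ coweightLattice Φ, ∃ w ∈ WeylGroup Φ, ∀ x, ζ x = w x + γ}

/-- The affine Weyl group `W_aff = {t_γ ∘ w : γ ∈ Q^∨, w ∈ W}` inside `E(V)`. -/
noncomputable def affineWeylGroup {V : Type*} [NormedAddCommGroup V] [InnerProductSpace ℝ V]
    (Φ : Set V) : Set (V ≃ᵃⁱ[ℝ] V) :=
  {ζ | ∃ γ ∈ corootLattice Φ, ∃ w ∈ WeylGroup Φ, ∀ x, ζ x = w x + γ}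

/-- The fundamental group `Ω`: the stabilizer of the alcove in `W_ext`. -/
noncomputable def fundGroup {V : Type*} [NormedAddCommGroup V] [InnerProductSpace ℝ V]
    (Φ : Set V) {n : ℕ} (α : Fin n → V) (α₀ : V) : Set (V ≃ᵃⁱ[ℝ] V) :=
  {ζ | ζ ∈ extendedWeylGroup Φ ∧ ζ '' alcove α α₀ = alcove α α₀}

/-- The Komrakov–Premet polytope. -/
def kpPolytope {V : Type*} [NormedAddCommGroup V] [InnerProductSpace ℝ V]
    {n : ℕ} (α : Fin n → V) (m : Fin n → ℕ) (α₀ : V) : Set V :=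
  {x ∈ alcove α α₀ | ∀ j, m j = 1 → ⟪α₀ + α j, x⟫ ≤ 1}

theorem neg_mem_of_isRootSystem {V : Type*} [NormedAddCommGroup V] [InnerProductSpace ℝ V]
    {Φ : Set V} (hΦ : IsRootSystem Φ) {β : V} (hβ : β ∈ Φ) : -β ∈ Φ := by
  have hne : β ≠ 0 := fun h => hΦ.not_zero (h ▸ hβ)
  have hi : ⟪β, β⟫ ≠ 0 := inner_self_ne_zero.mpr hne
  have h := hΦ.refl_mem β hβ β hβ
  have e : reflMap β β = -β := by
    rw [reflMap, mul_div_assoc, div_self hi]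
    module
  rwa [e] at h

/-- The coordinates in `α` of a vector given by its coordinates `d` in the family obtained from
`α` by replacing `α j` with `-∑ mᵢ αᵢ`. -/
theorem sum_update {V : Type*} [AddCommGroup V] [Module ℝ V] {n : ℕ} (α : Fin n → V)
    (m : Fin n → ℕ) (j : Fin n) (d : Fin n → ℝ) :
    ∑ i, d i • Function.update α j (-∑ i, (m i : ℝ) • α i) i
      = ∑ i, ((if i = j then 0 else d i) - d j * m i) • α i := by
  have h : ∀ i, d i • Function.update α j (-∑ i, (m i : ℝ) • α i) i
      = (if i = j then (0 : ℝ) else d i) • α i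
        + if i = j then -(d j • ∑ i, (m i : ℝ) • α i) else 0 := by
    intro i
    by_cases hij : i = j
    · subst hij; simp
    · simp [hij]
  simp_rw [h, sub_smul, mul_smul]
  rw [Finset.sum_add_distrib, Finset.sum_sub_distrib, ← Finset.smul_sum]
  simp [sub_eq_add_neg]

/-- When `m j = 1` the coordinate change is an involution, so it also describes the passage from
`α` to the modified family. -/
theorem sum_eq_sum_update {V : Type*} [AddCommGroup V] [Module ℝ V] {n : ℕ} (α : Fin n → V)
    (m : Fin n → ℕ) (j : Fin n) (hj : m j = 1) (c : Fin n → ℤ) :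
    ∑ i, (c i : ℝ) • α i
      = ∑ i, (((if i = j then 0 else c i) - c j * m i : ℤ) : ℝ) •
          Function.update α j (-∑ i, (m i : ℝ) • α i) i := by
  rw [sum_update α m j (fun i => (((if i = j then 0 else c i) - c j * m i : ℤ) : ℝ))]
  refine Finset.sum_congr rfl fun i _ => ?_
  congr 1
  by_cases hij : i = j
  · subst hij; simp [hj]
  · simp [hij, hj]

theorem coeff_unique {V : Type*} [AddCommGroup V] [Module ℝ V] {n : ℕ} {α : Fin n → V}
    (h : LinearIndependent ℝ α) {c d : Fin n → ℝ}
    (e : ∑ i, c i • α i = ∑ i, d i • α i) (i : Fin n) : c i = d i := by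
  have h0 : ∑ i, (c i - d i) • α i = 0 := by
    simp_rw [sub_smul]
    rw [Finset.sum_sub_distrib, e, sub_self]
  exact sub_eq_zero.mp (Fintype.linearIndependent_iff.mp h _ h0 i)

theorem coeff_bounds {V : Type*} [NormedAddCommGroup V] [InnerProductSpace ℝ V]
    {Φ : Set V} (hΦ : IsRootSystem Φ) {n : ℕ} {α : Fin n → V} (hα : IsBase Φ α)
    {m : Fin n → ℕ} {α₀ : V} (h₀ : IsHighestRoot Φ α m α₀) {β : V} (hβ : β ∈ Φ)
    {c : Fin n → ℤ} (hc : β = ∑ i, (c i : ℝ) • α i) :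
    ((∀ i, 0 ≤ c i) ∨ (∀ i, c i ≤ 0)) ∧ (∀ i, c i ≤ m i) ∧ ∀ i, -(m i : ℤ) ≤ c i := by
  refine ⟨?_, h₀.highest β hβ c hc, fun i => ?_⟩
  · obtain ⟨d, hd, hs⟩ := hα.int_comb β hβ
    have hcd : c = d := funext fun i => by
      exact_mod_cast coeff_unique hα.indep (hc.symm.trans hd) i
    rwa [hcd]
  · have := h₀.highest (-β) (neg_mem_of_isRootSystem hΦ hβ) (fun i => -c i)
      (by simp [hc]) i
    omega

theorem linearIndependent_update {V : Type*} [AddCommGroup V] [Module ℝ V] {n : ℕ}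
    {α : Fin n → V} (h : LinearIndependent ℝ α) {m : Fin n → ℕ} {j : Fin n} (hj : 0 < m j) :
    LinearIndependent ℝ (Function.update α j (-∑ i, (m i : ℝ) • α i)) := by
  rw [Fintype.linearIndependent_iff]
  intro g hg
  rw [sum_update] at hg
  have hz := Fintype.linearIndependent_iff.mp h _ hg
  have hgj : g j = 0 := by
    have := hz j
    have hm : (m j : ℝ) ≠ 0 := by exact_mod_cast hj.ne'
    simpa [hm] using this
  intro i
  by_cases hij : i = j
  · rw [hij, hgj]
  · simpa [hij, hgj] using hz i

theorem isBase_update {V : Type*} [NormedAddCommGroup V] [InnerProductSpace ℝ V]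
    {Φ : Set V} (hΦ : IsRootSystem Φ) {n : ℕ} {α : Fin n → V} (hα : IsBase Φ α)
    {m : Fin n → ℕ} {α₀ : V} (h₀ : IsHighestRoot Φ α m α₀) {j : Fin n} (hj : m j = 1) :
    IsBase Φ (Function.update α j (-α₀)) := by
  have hind : LinearIndependent ℝ (Function.update α j (-α₀)) := by
    rw [h₀.eq]; exact linearIndependent_update hα.indep (h₀.pos j)
  refine ⟨fun i => ?_, hind, ?_, fun β hβ => ?_⟩
  · by_cases hij : i = j
    · subst hij
      simpa using neg_mem_of_isRootSystem hΦ h₀.mem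
    · simpa [hij] using hα.mem i
  · have : Nonempty (Fin n) := ⟨j⟩
    refine hind.span_eq_top_of_card_eq_finrank ?_
    exact (Module.finrank_eq_card_basis (Module.Basis.mk hα.indep hα.spans.ge)).symm
  · obtain ⟨c, hc, -⟩ := hα.int_comb β hβ
    obtain ⟨hs, hu, hl⟩ := coeff_bounds hΦ hα h₀ hβ hc
    refine ⟨fun i => (if i = j then 0 else c i) - c j * m i, ?_, ?_⟩
    · rw [hc, h₀.eq]
      exact sum_eq_sum_update α m j hj c
    have h1 := hu j
    have h2 := hl j
    rw [hj] at h1 h2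
    have h3 : c j = -1 ∨ c j = 0 ∨ c j = 1 := by push_cast at h1 h2; omega
    rcases h3 with h | h | h
    · left
      intro i
      have := hl i
      simp only [h]
      split_ifs <;> omega
    · rcases hs with hs | hs
      · left
        intro i
        have := hs i
        simp only [h]
        split_ifs <;> omega
      · right
        intro i
        have := hs i
        simp only [h]
        split_ifs <;> omega
    · right
      intro i
      have := hu i
      simp only [h]
      split_ifs <;> omega

theorem isHighestRoot_update {V : Type*} [NormedAddCommGroup V] [InnerProductSpace ℝ V]
    {Φ : Set V} (hΦ : IsRootSystem Φ) {n : ℕ} {α : Fin n → V} (hα : IsBase Φ α)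
    {m : Fin n → ℕ} {α₀ : V} (h₀ : IsHighestRoot Φ α m α₀) {j : Fin n} (hj : m j = 1) :
    IsHighestRoot Φ (Function.update α j (-α₀)) m (-(α j)) := by
  refine ⟨h₀.pos, neg_mem_of_isRootSystem hΦ (hα.mem j), ?_, fun β hβ d hd => ?_⟩
  · rw [h₀.eq, sum_update α m j (fun i => (m i : ℝ))]
    have h : ∀ i, ((if i = j then (0 : ℝ) else m i) - m j * m i) • α i
        = if i = j then -α j else 0 := by
      intro i
      by_cases hij : i = j
      · subst hij; simp [hj]
      · simp [hij, hj]
    simp [h]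
  · have hc : β = ∑ i, (((if i = j then 0 else d i) - d j * m i : ℤ) : ℝ) • α i := by
      rw [hd, h₀.eq, sum_update α m j (fun i => (d i : ℝ))]
      refine Finset.sum_congr rfl fun i _ => ?_
      congr 1
      push_cast
      rfl
    obtain ⟨hs, hu, hl⟩ := coeff_bounds hΦ hα h₀ hβ hc
    have h1 := hu j
    have h2 := hl j
    simp only [hj, if_true] at h1 h2
    have h3 : d j = -1 ∨ d j = 0 ∨ d j = 1 := by push_cast at h1 h2; omega
    intro i
    by_cases hij : i = j
    · subst hij; omega
    have hui := hu i
    simp only [hij, if_false] at hui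
    rcases h3 with h | h | h
    · rw [h] at hui; omega
    · rw [h] at hui; omega
    · -- the `α j`-coordinate of the root is `-1`, so all its coordinates in `α` are nonpositive
      rcases hs with hs | hs
      · have := hs j
        simp [hj, h] at this
      · have := hs i
        simp only [hij, if_false, h] at this
        omega

theorem statement_1
    {V : Type*} [NormedAddCommGroup V] [InnerProductSpace ℝ V] [FiniteDimensional ℝ V]
    (Φ : Set V) (hΦ : IsRootSystem Φ)
    {n : ℕ} (α : Fin n → V) (hα : IsBase Φ α)
    (m : Fin n → ℕ) (α₀ : V) (h₀ : IsHighestRoot Φ α m α₀)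
    (j : Fin n) :
    (IsBase Φ (Function.update α j (-α₀)) ↔ m j = 1) ∧
    (m j = 1 → ∃ m' : Fin n → ℕ,
      IsHighestRoot Φ (Function.update α j (-α₀)) m' (-(α j))) := by
  refine ⟨⟨fun hB => ?_, isBase_update hΦ hα h₀⟩, fun hj => ⟨m, isHighestRoot_update hΦ hα h₀ hj⟩⟩
  obtain ⟨d, hd, -⟩ := hB.int_comb (α j) (hα.mem j)
  rw [h₀.eq, sum_update α m j (fun i => (d i : ℝ))] at hd
  have e : ∑ i, (if i = j then (1 : ℝ) else 0) • α i = α j := by simp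
  -- comparing `j`-th coordinates gives `1 = -d j * m j` in `ℤ`
  have h := coeff_unique hα.indep (e.trans hd) j
  simp only [if_true] at h
  have hz : (1 : ℤ) = (m j : ℤ) * (-d j) := by
    have : (1 : ℝ) = (m j : ℝ) * (-(d j : ℝ)) := by linarith
    exact_mod_cast this
  exact_mod_cast Int.eq_one_of_dvd_one (by positivity) ⟨_, hz⟩
end

section
/- Let α_j be minuscule, let w⁻ be the unique element of W with w⁻(Π) = −Π, let W_j be the subgroup of W generated by the reflections s_{αᵢ} for i ≠ j, and let w_j⁻ be the unique element of W_j with w_j⁻(Π ∖ {α_j}) = −(Π ∖ {α_j}). Then v_j = w_j⁻ ∘ w⁻. -/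
/-!
The proof has two halves.

*Both sides send `Π` to the same set.* Since `w_j⁻` lies in the parabolic subgroup `W_j`, it
preserves the coefficient of `α_j`, so `w_j⁻(α_j)` and `(w_j⁻)⁻¹(α₀)` are roots whose
`α_j`-coefficient is `1`; hence both are positive. The difference `δ = α₀ - w_j⁻(α_j)` is a
nonnegative combination of `Π ∖ {α_j}` because `α₀` is the highest root. As `(w_j⁻)⁻¹` maps
`Π ∖ {α_j}` to its negative, `(w_j⁻)⁻¹(δ) = (w_j⁻)⁻¹(α₀) - α_j` has height `-ht(δ) ≤ 0`, yet its
coefficients are nonnegative. So `δ = 0`, that is `w_j⁻(α_j) = α₀` (`longest_apply_eq_highest`),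
and `w_j⁻ w⁻(Π) = -w_j⁻(Π) = {-α₀} ∪ (Π ∖ {α_j})`.

*The Weyl group acts freely on bases* (`weyl_eq_one`). It is generated by the simple reflections
(`weyl_word`, by descent on the height of a positive root), and a word in simple reflections
which preserves positivity of the simple roots can be shortened by the exchange argument
(`exchange`, `word_eq_one`), so it represents the identity. Applied to `v_j⁻¹ w_j⁻ w⁻`, which
permutes `Π`, this gives the theorem.
-/

open scoped RealInnerProductSpace

open scoped RealInnerProductSpace

section

variable {V : Type*} [NormedAddCommGroup V] [InnerProductSpace ℝ V]

/-! ### Reflections as isometries -/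

/-- The reflection `s_a` as a linear isometry: Mathlib's reflection in the hyperplane `a^⊥`. -/
noncomputable def reflIso (a : V) : V ≃ₗᵢ[ℝ] V := (ℝ ∙ a)ᗮ.reflection

lemma reflIso_apply (a x : V) : reflIso a x = reflMap a x := by
  rw [reflIso, Submodule.reflection_orthogonal_apply, Submodule.reflection_singleton_apply,
    reflMap, real_inner_self_eq_norm_sq]
  simp only [RCLike.ofReal_real_eq_id, id]
  rw [neg_sub, two_smul, ← add_smul]
  congr 2
  ring

lemma reflIso_mul_self (a : V) : reflIso a * reflIso a = 1 :=
  Submodule.reflection_mul_reflection _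

lemma reflIso_inv (a : V) : (reflIso a)⁻¹ = reflIso a := Submodule.reflection_inv

lemma reflIso_conj (w : V ≃ₗᵢ[ℝ] V) (a : V) : w * reflIso a = reflIso (w a) * w := by
  ext x
  simp only [LinearIsometryEquiv.coe_mul, Function.comp_apply, reflIso_apply, reflMap, map_sub,
    map_smul, LinearIsometryEquiv.inner_map_map]

lemma eq_reflIso {w : V ≃ₗᵢ[ℝ] V} {a : V} (h : ∀ x, w x = reflMap a x) : w = reflIso a := by
  ext x
  rw [h, reflIso_apply]

/-! ### Coefficients with respect to the base -/

variable {Φ : Set V} {n : ℕ} {α : Fin n → V}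

/-- The simple roots as a basis of `V`. -/
noncomputable def IsBase.basis (hα : IsBase Φ α) : Module.Basis (Fin n) ℝ V :=
  Module.Basis.mk hα.indep hα.spans.ge

/-- The coefficient of `α i` in `x`. -/
noncomputable def IsBase.coef (hα : IsBase Φ α) (i : Fin n) : V →ₗ[ℝ] ℝ := hα.basis.coord i

/-- The height of `x`: the sum of its coefficients in the base. -/
noncomputable def IsBase.ht (hα : IsBase Φ α) : V →ₗ[ℝ] ℝ := ∑ i, hα.coef i

lemma IsBase.basis_apply (hα : IsBase Φ α) (i : Fin n) : hα.basis i = α i := by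
  simp [IsBase.basis]

lemma IsBase.sum_coef (hα : IsBase Φ α) (x : V) : ∑ i, hα.coef i x • α i = x := by
  have := hα.basis.sum_repr x
  simpa [IsBase.coef, hα.basis_apply] using this

lemma IsBase.coef_simple (hα : IsBase Φ α) (i k : Fin n) :
    hα.coef i (α k) = if k = i then 1 else 0 := by
  rw [← hα.basis_apply k, IsBase.coef, Module.Basis.coord_apply, Module.Basis.repr_self,
    Finsupp.single_apply]

lemma IsBase.coef_sum (hα : IsBase Φ α) (c : Fin n → ℝ) (k : Fin n) :
    hα.coef k (∑ i, c i • α i) = c k := by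
  simp [map_sum, hα.coef_simple]

lemma IsBase.ht_apply (hα : IsBase Φ α) (x : V) : hα.ht x = ∑ i, hα.coef i x := by
  simp [IsBase.ht]

lemma IsBase.ht_simple (hα : IsBase Φ α) (k : Fin n) : hα.ht (α k) = 1 := by
  simp [hα.ht_apply, hα.coef_simple]

lemma IsBase.eq_of_coef (hα : IsBase Φ α) {x y : V} (h : ∀ i, hα.coef i x = hα.coef i y) :
    x = y := by
  rw [← hα.sum_coef x, ← hα.sum_coef y]
  simp only [h]

lemma IsBase.nonneg_or_nonpos (hα : IsBase Φ α) {β : V} (hβ : β ∈ Φ) :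
    (∀ i, 0 ≤ hα.coef i β) ∨ (∀ i, hα.coef i β ≤ 0) := by
  obtain ⟨c, rfl, h | h⟩ := hα.int_comb β hβ
  · left
    intro i
    rw [hα.coef_sum]
    exact_mod_cast h i
  · right
    intro i
    rw [hα.coef_sum]
    exact_mod_cast h i

/-- One positive coefficient forces a root to be positive. -/
lemma IsBase.nonneg_of_pos (hα : IsBase Φ α) {β : V} (hβ : β ∈ Φ) {k : Fin n}
    (hk : 0 < hα.coef k β) (i : Fin n) : 0 ≤ hα.coef i β :=
  (hα.nonneg_or_nonpos hβ).elim (fun h => h i) (fun h => absurd (h k) (not_le.2 hk))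

lemma IsBase.coef_refl (hα : IsBase Φ α) {i k : Fin n} (hk : i ≠ k) (x : V) :
    hα.coef k (reflIso (α i) x) = hα.coef k x := by
  simp [reflIso_apply, reflMap, hα.coef_simple, hk]

/-- The simple reflection `s_i` permutes the positive roots other than `α i`. -/
lemma IsBase.refl_nonneg (hΦ : IsRootSystem Φ) (hα : IsBase Φ α) {β : V} (hβ : β ∈ Φ)
    (hp : ∀ k, 0 ≤ hα.coef k β) {i : Fin n} (hi : β ≠ α i) (k : Fin n) :
    0 ≤ hα.coef k (reflIso (α i) β) := by
  have hmem : reflIso (α i) β ∈ Φ := by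
    rw [reflIso_apply]
    exact hΦ.refl_mem _ (hα.mem i) _ hβ
  -- a positive root other than `α i` involves a second simple root, whose coefficient survives
  obtain ⟨l, hl, hl'⟩ : ∃ l, i ≠ l ∧ 0 < hα.coef l β := by
    by_contra! hcon
    have hsm : β = hα.coef i β • α i := by
      apply hα.eq_of_coef
      intro l
      by_cases hl : i = l
      · subst hl
        simp [hα.coef_simple]
      · have := le_antisymm (hcon l hl) (hp l)
        simp [hα.coef_simple, hl, this]
    rcases hΦ.reduced (α i) (hα.mem i) (hα.coef i β) (hsm ▸ hβ) with h | h
    · rw [h, one_smul] at hsm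
      exact hi hsm
    · have := hp i
      rw [h] at this
      norm_num at this
  exact hα.nonneg_of_pos hmem (k := l) (by rwa [hα.coef_refl hl]) k

/-! ### The Weyl group is generated by the simple reflections -/

/-- The product of a word in the simple reflections. -/
noncomputable def wordProd (α : Fin n → V) (l : List (Fin n)) : V ≃ₗᵢ[ℝ] V :=
  (l.map fun i => reflIso (α i)).prod

lemma wordProd_append (l l' : List (Fin n)) :
    wordProd α (l ++ l') = wordProd α l * wordProd α l' := by
  simp [wordProd]

lemma wordProd_cons (i : Fin n) (l : List (Fin n)) :
    wordProd α (i :: l) = reflIso (α i) * wordProd α l := by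
  simp [wordProd]

lemma wordProd_nil : wordProd α [] = 1 := by
  simp [wordProd]

lemma wordProd_mem (hΦ : IsRootSystem Φ) (hα : IsBase Φ α) (l : List (Fin n)) {β : V}
    (hβ : β ∈ Φ) : wordProd α l β ∈ Φ := by
  induction l with
  | nil => simpa [wordProd_nil] using hβ
  | cons i t ih =>
    rw [wordProd_cons, LinearIsometryEquiv.coe_mul, Function.comp_apply, reflIso_apply]
    exact hΦ.refl_mem _ (hα.mem i) _ ih

/-- The simple roots span and a root has positive norm, so a positive root makes a positive inner
product with some simple root. -/
lemma exists_inner_pos (hΦ : IsRootSystem Φ) (hα : IsBase Φ α) {β : V} (hβ : β ∈ Φ)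
    (hp : ∀ k, 0 ≤ hα.coef k β) : ∃ i, 0 < ⟪α i, β⟫ := by
  by_contra! hcon
  have h1 : ⟪β, β⟫ = ∑ i, hα.coef i β * ⟪α i, β⟫ := by
    conv_lhs => rw [← hα.sum_coef β, sum_inner]
    rw [hα.sum_coef β]
    exact Finset.sum_congr rfl fun i _ => real_inner_smul_left _ _ _
  have h2 : ⟪β, β⟫ ≤ 0 := by
    rw [h1]
    exact Finset.sum_nonpos fun i _ => mul_nonpos_of_nonneg_of_nonpos (hp i) (hcon i)
  have h3 : β = 0 := by
    by_contra h
    exact absurd (real_inner_self_pos.2 h) (not_lt.2 h2)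
  exact hΦ.not_zero (h3 ▸ hβ)

lemma reflIso_neg (a : V) : reflIso (-a) = reflIso a := by
  ext x
  simp [reflIso_apply, reflMap, neg_div]

/-- The reflection in a positive root is a product of simple ones: a positive root of minimal
height violating this could be lowered by a simple reflection. -/
lemma refl_mem_closure (hΦ : IsRootSystem Φ) (hα : IsBase Φ α) {β : V} (hβ : β ∈ Φ)
    (hp : ∀ k, 0 ≤ hα.coef k β) :
    reflIso β ∈ Subgroup.closure (Set.range fun i => reflIso (α i)) := by
  set G := Subgroup.closure (Set.range fun i => reflIso (α i))
  have hs : ∀ i, reflIso (α i) ∈ G := fun i => Subgroup.subset_closure ⟨i, rfl⟩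
  by_contra hbad
  obtain ⟨γ, ⟨hγ, hγp, hγb⟩, hmin⟩ := Set.exists_min_image
    {γ | γ ∈ Φ ∧ (∀ k, 0 ≤ hα.coef k γ) ∧ reflIso γ ∉ G} hα.ht
    (hΦ.finite.subset fun _ h => h.1) ⟨β, hβ, hp, hbad⟩
  obtain ⟨i, hi⟩ := exists_inner_pos hΦ hα hγ hγp
  have hne : γ ≠ α i := by
    rintro rfl
    exact hγb (hs i)
  have hai : α i ≠ 0 := fun h => hΦ.not_zero (h ▸ hα.mem i)
  have hlow : hα.ht (reflIso (α i) γ) < hα.ht γ := by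
    rw [reflIso_apply, reflMap, map_sub, map_smul, hα.ht_simple, smul_eq_mul, mul_one]
    have := real_inner_self_pos.2 hai
    have : 0 < 2 * ⟪α i, γ⟫ / ⟪α i, α i⟫ := by positivity
    linarith
  have hin : reflIso (reflIso (α i) γ) ∈ G := by
    by_contra hcon
    refine absurd (hmin _ ⟨?_, hα.refl_nonneg hΦ hγ hγp hne, hcon⟩) (not_le.2 hlow)
    rw [reflIso_apply]
    exact hΦ.refl_mem _ (hα.mem i) _ hγ
  apply hγb
  have : reflIso γ = (reflIso (α i))⁻¹ * (reflIso (reflIso (α i) γ) * reflIso (α i)) := by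
    rw [← reflIso_conj, inv_mul_cancel_left]
  rw [this]
  exact G.mul_mem (G.inv_mem (hs i)) (G.mul_mem hin (hs i))

lemma weyl_word (hΦ : IsRootSystem Φ) (hα : IsBase Φ α) {w : V ≃ₗᵢ[ℝ] V}
    (hw : w ∈ WeylGroup Φ) : ∃ l, w = wordProd α l := by
  have hG : w ∈ Subgroup.closure (Set.range fun i => reflIso (α i)) := by
    refine (Subgroup.closure_le _).2 ?_ hw
    rintro v ⟨a, ha, hv⟩
    rw [eq_reflIso hv]
    rcases hα.nonneg_or_nonpos ha with h | h
    · exact refl_mem_closure hΦ hα ha h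
    · have hna : -a ∈ Φ := by
        have ha0 : a ≠ 0 := fun h => hΦ.not_zero (h ▸ ha)
        have := hΦ.refl_mem a ha a ha
        rwa [reflMap, mul_div_cancel_right₀ _ (real_inner_self_pos.2 ha0).ne', two_smul,
          sub_add_cancel_left] at this
      rw [← reflIso_neg]
      exact refl_mem_closure hΦ hα hna fun k => by simpa using h k
  clear hw
  induction hG using Subgroup.closure_induction with
  | mem x hx =>
    obtain ⟨i, rfl⟩ := hx
    exact ⟨[i], by simp [wordProd]⟩
  | one => exact ⟨[], wordProd_nil.symm⟩
  | mul x y _ _ hx hy =>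
    obtain ⟨l, rfl⟩ := hx
    obtain ⟨l', rfl⟩ := hy
    exact ⟨l ++ l', (wordProd_append l l').symm⟩
  | inv x _ hx =>
    obtain ⟨l, rfl⟩ := hx
    refine ⟨l.reverse, ?_⟩
    simp [wordProd, List.prod_inv_reverse, List.map_reverse, Function.comp_def, reflIso_inv]

lemma weyl_mem (hΦ : IsRootSystem Φ) (hα : IsBase Φ α) {w : V ≃ₗᵢ[ℝ] V}
    (hw : w ∈ WeylGroup Φ) {β : V} (hβ : β ∈ Φ) : w β ∈ Φ := by
  obtain ⟨l, rfl⟩ := weyl_word hΦ hα hw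
  exact wordProd_mem hΦ hα l hβ

/-! ### The Weyl group acts freely on bases -/

/-- If a word takes a positive root `β` to one which is not positive, then the sign changes at
some letter `i`, just before which the root is `α i`. -/
lemma exchange (hΦ : IsRootSystem Φ) (hα : IsBase Φ α) {β : V} (hβ : β ∈ Φ)
    (hp : ∀ k, 0 ≤ hα.coef k β) (l : List (Fin n))
    (hl : ¬ ∀ k, 0 ≤ hα.coef k (wordProd α l β)) :
    ∃ a i b, l = a ++ i :: b ∧ wordProd α b β = α i := by
  induction l with
  | nil => exact absurd (by simpa [wordProd_nil] using hp) hl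
  | cons i t ih =>
    by_cases ht : ∀ k, 0 ≤ hα.coef k (wordProd α t β)
    · refine ⟨[], i, t, rfl, ?_⟩
      by_contra hne
      apply hl
      rw [wordProd_cons]
      exact hα.refl_nonneg hΦ (wordProd_mem hΦ hα t hβ) ht hne
    · obtain ⟨a, k, b, rfl, hb⟩ := ih ht
      exact ⟨i :: a, k, b, rfl, hb⟩

lemma word_eq_one (hΦ : IsRootSystem Φ) (hα : IsBase Φ α) (N : ℕ) :
    ∀ l : List (Fin n), l.length ≤ N →
      (∀ i k, 0 ≤ hα.coef k (wordProd α l (α i))) → wordProd α l = 1 := by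
  induction N with
  | zero =>
    intro l hl _
    rw [List.length_eq_zero_iff.1 (Nat.le_zero.1 hl), wordProd_nil]
  | succ N ih =>
    intro l hl hpos
    rcases List.eq_nil_or_concat l with rfl | ⟨l', k, rfl⟩
    · exact wordProd_nil
    have hk : reflIso (α k) (α k) = -α k :=
      Submodule.reflection_orthogonalComplement_singleton_eq_neg _
    -- the last letter makes `α k` negative, so the rest of the word must change its sign back
    have hneg : ¬ ∀ i, 0 ≤ hα.coef i (wordProd α l' (α k)) := by
      intro hcon
      have hz : wordProd α l' (α k) = 0 := by
        apply hα.eq_of_coef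
        intro i
        have h1 := hpos k i
        have h2 := hcon i
        simp only [List.concat_eq_append, wordProd_append, wordProd_cons, wordProd_nil, mul_one,
          LinearIsometryEquiv.coe_mul, Function.comp_apply, hk, map_neg] at h1
        rw [map_zero]
        linarith
      exact hΦ.not_zero (hz ▸ wordProd_mem hΦ hα l' (hα.mem k))
    have hkp : ∀ i, 0 ≤ hα.coef i (α k) := fun i => by
      rw [hα.coef_simple]
      split_ifs <;> norm_num
    obtain ⟨a, i, b, rfl, hb⟩ := exchange hΦ hα (hα.mem k) hkp l' hneg
    have hshort : wordProd α ((a ++ i :: b).concat k) = wordProd α (a ++ b) := by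
      simp only [List.concat_eq_append, wordProd_append, wordProd_cons, wordProd_nil, mul_one]
      rw [← hb, ← reflIso_conj, mul_assoc, mul_assoc, reflIso_mul_self, mul_one]
    rw [hshort] at hpos ⊢
    refine ih _ ?_ hpos
    simp only [List.concat_eq_append, List.length_append, List.length_cons] at hl ⊢
    omega

/-- An element of the Weyl group preserving the base is the identity. -/
lemma weyl_eq_one (hΦ : IsRootSystem Φ) (hα : IsBase Φ α) {w : V ≃ₗᵢ[ℝ] V}
    (hw : w ∈ WeylGroup Φ) (h : ∀ i, w (α i) ∈ Set.range α) : w = 1 := by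
  obtain ⟨l, rfl⟩ := weyl_word hΦ hα hw
  refine word_eq_one hΦ hα _ l le_rfl fun i k => ?_
  obtain ⟨p, hp⟩ := h i
  rw [← hp, hα.coef_simple]
  split_ifs <;> norm_num

/-! ### The parabolic subgroup `W_j` and the highest root -/

lemma parabolic_le (hα : IsBase Φ α) (j : Fin n) :
    Subgroup.closure {w : V ≃ₗᵢ[ℝ] V | ∃ i : Fin n, i ≠ j ∧ ∀ x, w x = reflMap (α i) x} ≤
      WeylGroup Φ :=
  Subgroup.closure_mono fun _ ⟨i, _, h⟩ => ⟨α i, hα.mem i, h⟩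

lemma parabolic_coef (hα : IsBase Φ α) {j : Fin n} {w : V ≃ₗᵢ[ℝ] V}
    (hw : w ∈ Subgroup.closure
      {w : V ≃ₗᵢ[ℝ] V | ∃ i : Fin n, i ≠ j ∧ ∀ x, w x = reflMap (α i) x}) :
    ∀ x, hα.coef j (w x) = hα.coef j x := by
  induction hw using Subgroup.closure_induction with
  | mem v hv =>
    obtain ⟨i, hi, hv⟩ := hv
    intro x
    rw [eq_reflIso hv, hα.coef_refl hi]
  | one => simp
  | mul v v' _ _ h h' =>
    intro x
    rw [LinearIsometryEquiv.coe_mul, Function.comp_apply, h, h']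
  | inv v _ h =>
    intro x
    rw [← h, ← Function.comp_apply (f := v), ← LinearIsometryEquiv.coe_mul, mul_inv_cancel,
      LinearIsometryEquiv.coe_one, id]

/-- For minuscule `α j`, the longest element of `W_j` takes `α j` to the highest root. -/
lemma longest_apply_eq_highest (hΦ : IsRootSystem Φ) (hα : IsBase Φ α) {m : Fin n → ℕ} {α₀ : V}
    (h₀ : IsHighestRoot Φ α m α₀) {j : Fin n} (hj : m j = 1) {w : V ≃ₗᵢ[ℝ] V}
    (hw : w ∈ Subgroup.closure
      {w : V ≃ₗᵢ[ℝ] V | ∃ i : Fin n, i ≠ j ∧ ∀ x, w x = reflMap (α i) x})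
    (hwPi : ∀ i, i ≠ j → ∃ k, w⁻¹ (α i) = -α k) : w (α j) = α₀ := by
  have hinv : ∀ x, w⁻¹ (w x) = x := fun x => w.symm_apply_apply x
  have hc₀ : ∀ i, hα.coef i α₀ = m i := fun i => by rw [h₀.eq, hα.coef_sum]
  have hle : ∀ i, hα.coef i (w (α j)) ≤ hα.coef i α₀ := by
    have hmem := weyl_mem hΦ hα (parabolic_le hα j hw) (hα.mem j)
    intro i
    obtain ⟨c, hc, -⟩ := hα.int_comb _ hmem
    rw [hc₀, hc, hα.coef_sum]
    exact_mod_cast h₀.highest _ hmem c hc i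
  have hw' := Subgroup.inv_mem _ hw
  set δ := α₀ - w (α j) with hδ
  have hδj : hα.coef j δ = 0 := by
    rw [hδ, map_sub, hc₀, parabolic_coef hα hw, hα.coef_simple, hj]
    simp
  have hδ0 : ∀ i, 0 ≤ hα.coef i δ := fun i => by
    rw [hδ, map_sub]
    exact sub_nonneg.2 (hle i)
  -- `w⁻¹ α₀` is a root with `α j`-coefficient `1`, so subtracting `α j` leaves it nonnegative
  have hwδ : 0 ≤ hα.ht (w⁻¹ δ) := by
    rw [hα.ht_apply]
    refine Finset.sum_nonneg fun i _ => ?_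
    by_cases hi : j = i
    · subst hi
      rw [parabolic_coef hα hw', hδj]
    · rw [hδ, map_sub, hinv, map_sub, hα.coef_simple, if_neg hi, sub_zero]
      refine hα.nonneg_of_pos (weyl_mem hΦ hα (parabolic_le hα j hw') h₀.mem) (k := j) ?_ i
      rw [parabolic_coef hα hw', hc₀, hj]
      norm_num
  have hflip : hα.ht (w⁻¹ δ) = -hα.ht δ := by
    conv_lhs => rw [← hα.sum_coef δ]
    rw [map_sum, map_sum, hα.ht_apply, ← Finset.sum_neg_distrib]
    refine Finset.sum_congr rfl fun i _ => ?_
    by_cases hi : i = j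
    · subst hi
      simp [hδj]
    · obtain ⟨k, hk⟩ := hwPi i hi
      rw [map_smul, map_smul, hk, map_neg, hα.ht_simple, smul_eq_mul, mul_neg_one]
  have hzero : ∑ i, hα.coef i δ = 0 := by
    rw [hflip, hα.ht_apply] at hwδ
    exact le_antisymm (by linarith) (Finset.sum_nonneg fun i _ => hδ0 i)
  have hall := (Finset.sum_eq_zero_iff_of_nonneg fun i _ => hδ0 i).1 hzero
  apply hα.eq_of_coef
  intro i
  have := hall i (Finset.mem_univ i)
  rw [hδ, map_sub] at this
  linarith

end

theorem statement_7
    {V : Type*} [NormedAddCommGroup V] [InnerProductSpace ℝ V] [FiniteDimensional ℝ V]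
    (Φ : Set V) (hΦ : IsRootSystem Φ)
    {n : ℕ} (α : Fin n → V) (hα : IsBase Φ α)
    (m : Fin n → ℕ) (α₀ : V) (h₀ : IsHighestRoot Φ α m α₀)
    (j : Fin n) (hj : m j = 1)
    -- `wm` is the longest element `w⁻`, characterized by `w⁻(Π) = -Π`
    (wm : V ≃ₗᵢ[ℝ] V) (hwm : wm ∈ WeylGroup Φ)
    (hwmPi : ⇑wm '' Set.range α = (fun x : V => -x) '' Set.range α)
    -- `Wj` is the Weyl group generated by the reflections in the `α i`, `i ≠ j`
    (Wj : Subgroup (V ≃ₗᵢ[ℝ] V))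
    (hWj : Wj = Subgroup.closure
      {w : V ≃ₗᵢ[ℝ] V | ∃ i : Fin n, i ≠ j ∧ ∀ x, w x = reflMap (α i) x})
    -- `wjm` is the longest element `w_j⁻` of `Wj`
    (wjm : V ≃ₗᵢ[ℝ] V) (hwjm : wjm ∈ Wj)
    (hwjmPi : ⇑wjm '' (Set.range α \ {α j}) = (fun x : V => -x) '' (Set.range α \ {α j}))
    -- `vj` is the element of `W` with `vj(Π) = Π_j`
    (vj : V ≃ₗᵢ[ℝ] V) (hvj : vj ∈ WeylGroup Φ)
    (hvjPi : ⇑vj '' Set.range α = Set.range (Function.update α j (-α₀))) :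
    vj = wjm * wm := by
  have hinj := hα.indep.injective
  have hWjle : wjm ∈ WeylGroup Φ := parabolic_le hα j (hWj ▸ hwjm)
  have hwj : wjm (α j) = α₀ := by
    refine longest_apply_eq_highest hΦ hα h₀ hj (hWj ▸ hwjm) fun i hi => ?_
    have : -α i ∈ ⇑wjm '' (Set.range α \ {α j}) := by
      rw [hwjmPi]
      exact ⟨α i, ⟨⟨i, rfl⟩, fun h => hi (hinj h)⟩, rfl⟩
    obtain ⟨-, ⟨⟨k, rfl⟩, -⟩, hk⟩ := this
    refine ⟨k, ?_⟩
    rw [← neg_eq_iff_eq_neg, ← map_neg, ← hk]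
    exact wjm.symm_apply_apply _
  have hone : vj⁻¹ * (wjm * wm) = 1 := by
    refine weyl_eq_one hΦ hα (mul_mem (inv_mem hvj) (mul_mem hWjle hwm)) fun i => ?_
    have hmem : wjm (wm (α i)) ∈ ⇑vj '' Set.range α := by
      rw [hvjPi]
      have h1 : wm (α i) ∈ (fun x : V => -x) '' Set.range α := hwmPi ▸ ⟨α i, ⟨i, rfl⟩, rfl⟩
      obtain ⟨-, ⟨k, rfl⟩, hk⟩ := h1
      simp only at hk
      rw [← hk, map_neg]
      by_cases hkj : k = j
      · subst hkj
        exact ⟨k, by rw [Function.update_self, hwj]⟩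
      · have h2 : wjm (α k) ∈ (fun x : V => -x) '' (Set.range α \ {α j}) :=
          hwjmPi ▸ ⟨α k, ⟨⟨k, rfl⟩, fun h => hkj (hinj h)⟩, rfl⟩
        obtain ⟨-, ⟨⟨p, rfl⟩, hp⟩, hpk⟩ := h2
        simp only at hpk
        have hpj : p ≠ j := fun h => hp (h ▸ rfl)
        exact ⟨p, by rw [Function.update_of_ne hpj, ← hpk, neg_neg]⟩
    obtain ⟨x, hx, hvx⟩ := hmem
    have : (vj⁻¹ * (wjm * wm)) (α i) = x := by
      simp only [LinearIsometryEquiv.coe_mul, Function.comp_apply, ← hvx]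
      exact vj.symm_apply_apply x
    rwa [this]
  exact inv_mul_eq_one.1 hone
end
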